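/- arXiv:2103.09625 — 5 statements merged into one kernel-verified Lean document; each statement's English description precedes it below -/
import Mathlib

section
/- Razumikhin-type exponential stability with impulses (scalar Lyapunov form of Lemma 1). Let τ > 0 and let t0 < t1 < t2 < ⋯ be a strictly increasing sequence of impulse times tending to ∞. Let W : [t0 − τ, ∞) → [0, ∞) be continuous on [t0 − τ, t0] and on each interval (t_{k−1}, t_k], with a right limit W(t_k⁺) at each t_k. Suppose there are constants c > 0, σ > 0, λ > 0, γ ≥ 1, and q ≥ γ e^{λτ} with σ − λ ≥ c, and constants η_k with 0 < η_k ≤ 1, such that: (ii) for each k and each t ∈ [t_{k−1}, t_k) at which the Razumikhin condition q W(t) ≥ W(t+θ) holds for all θ ∈ [−τ, 0], the upper right Dini derivative satisfies D⁺W(t) ≤ c W(t); (iii) W(t_k⁺) ≤ η_k W(t_k) for every k; (iv) γ ≥ 1/η_k and ln η_k < −(σ + λ)(t_{k+1} − t_k) for every k. Then W(t) ≤ γ (sup_{θ ∈ [−τ, 0]} W(t0 + θ)) e^{−λ(t − t0)} for all t ≥ t0; in particular W converges to 0 exponentially with rate λ. -/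
open Filter Set


/-- One-interval comparison: a function starting strictly below the barrier `B` cannot cross it,
if at every first contact its Dini derivative is below the slope of `B`. -/
theorem barrier_step (a b : ℝ) (W B B' : ℝ → ℝ) (w : ℝ)
    (hWc : ContinuousOn W (Ioc a b))
    (hW : Tendsto W (nhdsWithin a (Ioi a)) (nhds w))
    (hB : ∀ x, HasDerivAt B (B' x) x)
    (hw : w < B a)
    (hD : ∀ x ∈ Ioo a b, (∀ y ∈ Ioc a x, W y ≤ B y) → W x = B x →
      Filter.limsup (fun h : ℝ => (((W (x + h) - W x) / h : ℝ) : EReal))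
            (nhdsWithin 0 (Ioi 0)) < ((B' x : ℝ) : EReal)) :
    ∀ u ∈ Ioc a b, W u ≤ B u := by
  by_contra hcon
  push Not at hcon
  obtain ⟨u0, hu0, hu0'⟩ := hcon
  have hBc : Continuous B := continuous_iff_continuousAt.2 fun x => (hB x).continuousAt
  set T : Set ℝ := {u | u ∈ Ioc a b ∧ B u < W u} with hT
  have hTne : T.Nonempty := ⟨u0, hu0, hu0'⟩
  have hTbdd : BddBelow T := ⟨a, fun u hu => hu.1.1.le⟩
  set x := sInf T with hx
  have hxu0 : x ≤ u0 := csInf_le hTbdd ⟨hu0, hu0'⟩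
  have hxb : x ≤ b := hxu0.trans hu0.2
  have hnear : ∀ᶠ y in nhdsWithin a (Ioi a), W y < B y :=
    hW.eventually_lt (hBc.continuousAt.tendsto.mono_left nhdsWithin_le_nhds) hw
  have hax : a < x := by
    obtain ⟨d, hd, hd'⟩ := mem_nhdsGT_iff_exists_Ioo_subset.1 hnear
    refine lt_of_lt_of_le hd (le_csInf hTne fun u hu => ?_)
    by_contra hlt
    have := hd' ⟨hu.1.1, not_le.1 hlt⟩
    exact absurd hu.2 (not_lt.2 (le_of_lt this))
  have hbelow : ∀ y ∈ Ioo a x, W y ≤ B y := by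
    intro y hy
    by_contra hlt
    exact absurd (csInf_le hTbdd (show y ∈ T from ⟨⟨hy.1, hy.2.le.trans hxb⟩, not_le.1 hlt⟩))
      (not_le.2 hy.2)
  have hcx : ContinuousWithinAt W (Ioc a b) x := hWc x ⟨hax, hxb⟩
  have hWx : W x ≤ B x := by
    have h1 : Tendsto W (nhdsWithin x (Ioo a x)) (nhds (W x)) :=
      hcx.mono_left (nhdsWithin_mono _ fun y hy => ⟨hy.1, hy.2.le.trans hxb⟩)
    have h2 : Tendsto B (nhdsWithin x (Ioo a x)) (nhds (B x)) :=
      hBc.continuousAt.tendsto.mono_left nhdsWithin_le_nhds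
    have : (nhdsWithin x (Ioo a x)).NeBot := by
      rw [nhdsWithin_Ioo_eq_nhdsLT hax]; infer_instance
    exact le_of_tendsto_of_tendsto h1 h2
      (eventually_nhdsWithin_of_forall hbelow)
  have hxltb : x < b := by
    rcases hxb.lt_or_eq with h | h
    · exact h
    · have : u0 = x := le_antisymm (h ▸ hu0.2) hxu0
      rw [this] at hu0'
      exact absurd hWx (not_le.2 hu0')
  have hfreq : ∃ᶠ y in nhdsWithin x (Ioi x), B y < W y := by
    intro hev
    obtain ⟨d, hd, hd'⟩ := mem_nhdsGT_iff_exists_Ioo_subset.1 hev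
    obtain ⟨u, hu, hud⟩ := exists_lt_of_csInf_lt hTne (show sInf T < d from hd)
    have hxu : x ≤ u := csInf_le hTbdd hu
    have hne : x ≠ u := by
      rintro h
      rw [← h] at hu
      exact absurd hWx (not_le.2 hu.2)
    exact hd' ⟨lt_of_le_of_ne hxu hne, hud⟩ hu.2
  have hWx' : W x = B x := by
    refine le_antisymm hWx ?_
    by_contra hlt
    have h1 : Tendsto W (nhdsWithin x (Ioi x)) (nhds (W x)) := by
      have : nhdsWithin x (Ioi x) = nhdsWithin x (Ioo x b) :=
        (nhdsWithin_Ioo_eq_nhdsGT hxltb).symm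
      rw [this]
      exact hcx.mono_left (nhdsWithin_mono _ fun y hy => ⟨hax.trans hy.1, hy.2.le⟩)
    have h2 : Tendsto B (nhdsWithin x (Ioi x)) (nhds (B x)) :=
      hBc.continuousAt.tendsto.mono_left nhdsWithin_le_nhds
    have := h1.eventually_lt h2 (not_le.1 hlt)
    exact hfreq (this.mono fun y hy => not_lt.2 hy.le)
  have hlim := hD x ⟨hax, hxltb⟩ (fun y hy => by
    rcases hy.2.lt_or_eq with h | h
    · exact hbelow y ⟨hy.1, h⟩
    · rw [h]; exact hWx) hWx'
  obtain ⟨r, hr1, hr2⟩ := EReal.lt_iff_exists_real_btwn.1 hlim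
  have hr2' : r < B' x := by exact_mod_cast hr2
  have hev1 : ∀ᶠ h in nhdsWithin (0:ℝ) (Ioi 0), (W (x + h) - W x) / h < r := by
    have := Filter.eventually_lt_of_limsup_lt hr1
    exact this.mono fun h hh => by exact_mod_cast hh
  have hev2 : ∀ᶠ h in nhdsWithin (0:ℝ) (Ioi 0), r < (B (x + h) - B x) / h := by
    have h1 := (hasDerivAt_iff_tendsto_slope_zero.1 (hB x))
    have h2 := h1.mono_left (nhdsWithin_mono (0:ℝ) (fun y (hy : y ∈ Ioi (0:ℝ)) => (ne_of_gt hy : y ≠ 0)))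
    refine (h2.eventually_const_lt hr2').mono fun h hh => ?_
    simpa [div_eq_inv_mul] using hh
  have hev : ∀ᶠ h in nhdsWithin (0:ℝ) (Ioi 0), W (x + h) < B (x + h) := by
    filter_upwards [hev1, hev2, self_mem_nhdsWithin] with h h1 h2 h3
    have h4 := h1.trans h2
    rw [div_lt_div_iff_of_pos_right h3] at h4
    linarith
  have htr : Tendsto (fun y => y - x) (nhdsWithin x (Ioi x)) (nhdsWithin 0 (Ioi 0)) := by
    refine tendsto_nhdsWithin_iff.2 ⟨?_, ?_⟩
    · have : Tendsto (fun y => y - x) (nhds x) (nhds (x - x)) :=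
        (continuous_id.sub continuous_const).tendsto x
      rw [sub_self] at this
      exact this.mono_left nhdsWithin_le_nhds
    · exact eventually_nhdsWithin_of_forall fun y hy => mem_Ioi.2 (sub_pos.2 (mem_Ioi.1 hy))
  refine hfreq ((htr.eventually hev).mono fun y hy => ?_)
  rw [add_sub_cancel] at hy
  exact not_lt.2 hy.le

/-- **Razumikhin-type exponential stability with impulses (scalar form of Lemma 1).**
`t : ℕ → ℝ` is the strictly increasing sequence `t0 < t1 < t2 < ⋯` of impulse times
tending to `∞`.  `W` is nonnegative on `[t0 − τ, ∞)`, continuous on `[t0 − τ, t0]` and on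
each `(t_k, t_{k+1}]`, with right limit `Wplus k` at each `t_k`.  Under the Razumikhin
derivative condition (ii), the jump condition (iii) and the impulse-gain condition (iv),
`W(u) ≤ γ (sup_{θ∈[−τ,0]} W(t0+θ)) e^{−λ(u−t0)}` for all `u ≥ t0`. -/
theorem razumikhin_impulsive_exponential_stability
    (τ : ℝ) (hτ : 0 < τ)
    (t : ℕ → ℝ) (htmono : StrictMono t) (httop : Tendsto t atTop atTop)
    (W : ℝ → ℝ) (Wplus : ℕ → ℝ)
    (hWnonneg : ∀ u, t 0 - τ ≤ u → 0 ≤ W u)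
    (hWcont0 : ContinuousOn W (Icc (t 0 - τ) (t 0)))
    (hWcont : ∀ k : ℕ, ContinuousOn W (Ioc (t k) (t (k + 1))))
    (hWplus : ∀ k : ℕ, Tendsto W (nhdsWithin (t k) (Ioi (t k))) (nhds (Wplus k)))
    (c σ lam γ q : ℝ) (η : ℕ → ℝ)
    (hc : 0 < c) (hσ : 0 < σ) (hlam : 0 < lam) (hγ : 1 ≤ γ)
    (hq : γ * Real.exp (lam * τ) ≤ q) (hσlam : c ≤ σ - lam)
    (hη : ∀ k, 0 < η k ∧ η k ≤ 1)
    -- (ii): Razumikhin-type Dini-derivative condition on each interval `[t_k, t_{k+1})`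
    (hii : ∀ k : ℕ, ∀ u ∈ Ico (t k) (t (k + 1)),
      (∀ θ ∈ Icc (-τ) (0 : ℝ), W (u + θ) ≤ q * W u) →
        Filter.limsup (fun h : ℝ => (((W (u + h) - W u) / h : ℝ) : EReal))
            (nhdsWithin 0 (Ioi 0))
          ≤ ((c * W u : ℝ) : EReal))
    -- (iii): jump estimate at each impulse time
    (hiii : ∀ k : ℕ, Wplus k ≤ η k * W (t k))
    -- (iv): impulse-gain conditions
    (hiv : ∀ k : ℕ, 1 / η k ≤ γ ∧ Real.log (η k) < -(σ + lam) * (t (k + 1) - t k)) :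
    ∀ u, t 0 ≤ u →
      W u ≤ γ * sSup (W '' Icc (t 0 - τ) (t 0)) * Real.exp (-lam * (u - t 0)) := by
  have key : ∀ M, 0 < M → (∀ s ∈ Icc (t 0 - τ) (t 0), W s ≤ M) → ∀ k : ℕ,
      ∀ u ∈ Icc (t 0 - τ) (t k), W u ≤ M * Real.exp (-lam * (u - t 0)) := by
    intro M hM hMs k
    induction k with
    | zero =>
      intro u hu
      refine (hMs u hu).trans (le_mul_of_one_le_right hM.le ?_)
      rw [Real.one_le_exp_iff]
      nlinarith [hu.2]
    | succ k ih =>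
      have h0k : t 0 ≤ t k := htmono.monotone (Nat.zero_le k)
      have hkk : t k < t (k + 1) := htmono (Nat.lt_succ_self k)
      set Δ := t (k + 1) - t k with hΔ
      set E : ℝ := M * Real.exp (-lam * (t k - t 0)) with hE
      have hEpos : 0 < E := by positivity
      have hBE : ∀ u, M * Real.exp (-lam * (u - t 0)) = E * Real.exp (-lam * (u - t k)) := by
        intro u
        rw [hE, mul_assoc, ← Real.exp_add]
        congr 2; ring
      set A : ℝ := E * Real.exp (-(σ + lam) * Δ) with hA
      have hApos : 0 < A := by positivity
      have hη1 : η k < Real.exp (-(σ + lam) * Δ) := (Real.log_lt_iff_lt_exp (hη k).1).1 (hiv k).2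
      have hηA : η k * E < A := by
        rw [hA, mul_comm]
        exact mul_lt_mul_of_pos_left hη1 hEpos
      have hEγ : E ≤ γ * A := by
        have h1 : 1 ≤ γ * η k := (div_le_iff₀ (hη k).1).1 (hiv k).1
        calc E ≤ (γ * η k) * E := le_mul_of_one_le_left hEpos.le h1
          _ = γ * (η k * E) := by ring
          _ ≤ γ * A := mul_le_mul_of_nonneg_left hηA.le (by linarith)
      have hle : ∀ u ∈ Ioc (t k) (t (k + 1)),
          A * Real.exp (σ * (u - t k)) ≤ M * Real.exp (-lam * (u - t 0)) := by
        intro u hu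
        rw [hBE, hA, mul_assoc, ← Real.exp_add]
        refine mul_le_mul_of_nonneg_left (Real.exp_le_exp.2 ?_) hEpos.le
        have : u - t k ≤ Δ := by rw [hΔ]; linarith [hu.2]
        nlinarith
      have hstep : ∀ u ∈ Ioc (t k) (t (k + 1)), W u ≤ A * Real.exp (σ * (u - t k)) := by
        refine barrier_step (t k) (t (k + 1)) W (fun u => A * Real.exp (σ * (u - t k)))
          (fun u => σ * (A * Real.exp (σ * (u - t k)))) (Wplus k) (hWcont k) (hWplus k) ?_ ?_ ?_
        · intro x
          have h1 : HasDerivAt (fun u : ℝ => σ * (u - t k)) (σ * 1) x :=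
            ((hasDerivAt_id x).sub_const (t k)).const_mul σ
          refine (h1.exp.const_mul A).congr_deriv ?_
          ring
        · have hk : W (t k) ≤ E := ih (t k) ⟨by linarith, le_rfl⟩
          have := mul_le_mul_of_nonneg_left hk (hη k).1.le
          simp only [sub_self, mul_zero, Real.exp_zero, mul_one]
          linarith [hiii k]
        · intro x hx hpast hWx
          have hexp1 : 1 ≤ Real.exp (σ * (x - t k)) :=
            Real.one_le_exp (mul_nonneg hσ.le (by linarith [hx.1]))
          have hAW : A ≤ W x := by
            rw [hWx]; exact le_mul_of_one_le_right hApos.le hexp1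
          have hraz : ∀ θ ∈ Icc (-τ) (0 : ℝ), W (x + θ) ≤ q * W x := by
            intro θ hθ
            have hb : W (x + θ) ≤ M * Real.exp (-lam * (x + θ - t 0)) := by
              rcases le_or_gt (x + θ) (t k) with h | h
              · exact ih _ ⟨by linarith [hx.1, hθ.1], h⟩
              · exact (hpast _ ⟨h, by linarith [hθ.2]⟩).trans
                  (hle _ ⟨h, by linarith [hθ.2, hx.2]⟩)
            have h2 : M * Real.exp (-lam * (x + θ - t 0)) ≤ E * Real.exp (lam * τ) := by
              rw [hBE]
              refine mul_le_mul_of_nonneg_left (Real.exp_le_exp.2 ?_) hEpos.le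
              nlinarith [hx.1, hθ.1]
            calc W (x + θ) ≤ E * Real.exp (lam * τ) := hb.trans h2
              _ ≤ (γ * A) * Real.exp (lam * τ) :=
                mul_le_mul_of_nonneg_right hEγ (Real.exp_pos _).le
              _ = (γ * Real.exp (lam * τ)) * A := by ring
              _ ≤ q * A := mul_le_mul_of_nonneg_right hq hApos.le
              _ ≤ q * W x := mul_le_mul_of_nonneg_left hAW
                (le_trans (by positivity) hq)
          refine lt_of_le_of_lt (hii k x ⟨hx.1.le, hx.2⟩ hraz) ?_
          rw [EReal.coe_lt_coe_iff]
          simp only [← hWx]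
          exact mul_lt_mul_of_pos_right (by linarith) (by linarith)
      intro u hu
      rcases le_or_gt u (t k) with h | h
      · exact ih u ⟨hu.1, h⟩
      · exact (hstep u ⟨h, hu.2⟩).trans (hle u ⟨h, hu.2⟩)
  intro u hu
  obtain ⟨k, hk⟩ := (httop.eventually_ge_atTop u).exists
  set S := sSup (W '' Icc (t 0 - τ) (t 0)) with hS
  have hbdd : BddAbove (W '' Icc (t 0 - τ) (t 0)) := (isCompact_Icc.image_of_continuousOn hWcont0).bddAbove
  have hWS : ∀ s ∈ Icc (t 0 - τ) (t 0), W s ≤ S := fun s hs => le_csSup hbdd ⟨s, hs, rfl⟩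
  have hS0 : 0 ≤ S := (hWnonneg (t 0) (by linarith)).trans (hWS (t 0) ⟨by linarith, le_rfl⟩)
  have hfin : W u ≤ S * Real.exp (-lam * (u - t 0)) := by
    have hexp : 0 < Real.exp (-lam * (u - t 0)) := Real.exp_pos _
    rw [← div_le_iff₀ hexp]
    refine le_of_forall_pos_le_add fun ε hε => ?_
    rw [div_le_iff₀ hexp]
    exact key (S + ε) (by linarith) (fun s hs => (hWS s hs).trans (by linarith)) k u
      ⟨by linarith, hk⟩
  refine hfin.trans (mul_le_mul_of_nonneg_right ?_ (Real.exp_pos _).le)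
  exact le_mul_of_one_le_left hS0 hγ
end

section
/- (Lemma 4, finite-time comparison lemma) Let α > 0 and 0 < η < 1 be constants, let t0 ∈ ℝ, and let V : [t0, ∞) → ℝ be a continuous, nonnegative, differentiable function satisfying V(t0) ≥ 0 and V̇(t) ≤ −α V(t)^η for all t ≥ t0. Set t1 = t0 + V(t0)^{1−η}/(α(1−η)). Then V(t)^{1−η} ≤ V(t0)^{1−η} − α(1−η)(t − t0) for all t0 ≤ t ≤ t1, and V(t) = 0 for all t ≥ t1. -/
/-- **Lemma 4 (finite-time comparison lemma).** If `V : [t0, ∞) → ℝ` is continuous,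
nonnegative and differentiable with `V̇(t) ≤ −α V(t)^η` for all `t ≥ t0`, where `α > 0`
and `0 < η < 1`, and `t1 = t0 + V(t0)^{1−η}/(α(1−η))`, then
`V(t)^{1−η} ≤ V(t0)^{1−η} − α(1−η)(t−t0)` on `[t0, t1]` and `V(t) = 0` for all `t ≥ t1`. -/
theorem lemma4_finite_time_comparison
    (α η t0 : ℝ) (hα : 0 < α) (hη0 : 0 < η) (hη1 : η < 1)
    (V V' : ℝ → ℝ)
    (hV0 : ∀ t, t0 ≤ t → 0 ≤ V t)
    (hVderiv : ∀ t, t0 ≤ t → HasDerivAt V (V' t) t)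
    (hVineq : ∀ t, t0 ≤ t → V' t ≤ -α * V t ^ η)
    (t1 : ℝ) (ht1 : t1 = t0 + V t0 ^ (1 - η) / (α * (1 - η))) :
    (∀ t, t0 ≤ t → t ≤ t1 → V t ^ (1 - η) ≤ V t0 ^ (1 - η) - α * (1 - η) * (t - t0)) ∧
    (∀ t, t1 ≤ t → V t = 0) := by
  have hc : 0 < α * (1 - η) := mul_pos hα (by linarith)
  have hanti : AntitoneOn V (Set.Ici t0) := by
    apply antitoneOn_of_deriv_nonpos (convex_Ici t0)
    · intro x hx
      exact (hVderiv x hx).continuousAt.continuousWithinAt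
    · intro x hx
      exact (hVderiv x (interior_subset hx)).differentiableAt.differentiableWithinAt
    · intro x hx
      have hx' : t0 ≤ x := interior_subset hx
      rw [(hVderiv x hx').deriv]
      have h1 := hVineq x hx'
      have h2 : 0 ≤ α * V x ^ η := mul_nonneg hα.le (Real.rpow_nonneg (hV0 x hx') _)
      linarith
  have key : ∀ t, t0 ≤ t → 0 < V t →
      V t ^ (1 - η) ≤ V t0 ^ (1 - η) - α * (1 - η) * (t - t0) := by
    intro t ht hpos
    have hp : ∀ s ∈ Set.Icc t0 t, 0 < V s := fun s hs =>
      lt_of_lt_of_le hpos (hanti hs.1 ht hs.2)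
    have hd : ∀ s ∈ Set.Icc t0 t, HasDerivAt (fun s => V s ^ (1 - η) + α * (1 - η) * s)
        (V' s * (1 - η) * V s ^ ((1 - η) - 1) + α * (1 - η) * 1) s := fun s hs =>
      ((hVderiv s hs.1).rpow_const (Or.inl (hp s hs).ne')).add
        ((hasDerivAt_id s).const_mul _)
    have hW : AntitoneOn (fun s => V s ^ (1 - η) + α * (1 - η) * s) (Set.Icc t0 t) := by
      apply antitoneOn_of_deriv_nonpos (convex_Icc t0 t)
      · intro x hx
        exact (hd x hx).continuousAt.continuousWithinAt
      · intro x hx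
        exact (hd x (interior_subset hx)).differentiableAt.differentiableWithinAt
      · intro x hx
        have hx' : x ∈ Set.Icc t0 t := interior_subset hx
        rw [(hd x hx').deriv]
        have h1 := hVineq x hx'.1
        have h2 : 0 < V x ^ ((1 - η) - 1) := Real.rpow_pos_of_pos (hp x hx') _
        have h3 : V x ^ η * V x ^ ((1 - η) - 1) = 1 := by
          rw [← Real.rpow_add (hp x hx')]
          simp
        have h4 := mul_le_mul_of_nonneg_right h1
          (mul_pos (show 0 < 1 - η by linarith) h2).le
        have h5 : -α * V x ^ η * ((1 - η) * V x ^ ((1 - η) - 1)) = -(α * (1 - η)) := by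
          linear_combination (-α * (1 - η)) * h3
        linarith
    have := hW (Set.left_mem_Icc.2 ht) (Set.right_mem_Icc.2 ht) ht
    simp only at this
    linarith
  have ht1' : α * (1 - η) * (t1 - t0) = V t0 ^ (1 - η) := by
    rw [ht1, add_sub_cancel_left, mul_div_cancel₀ _ hc.ne']
  have h01 : t0 ≤ t1 := by
    rw [ht1]
    have := div_nonneg (Real.rpow_nonneg (hV0 t0 le_rfl) (1 - η)) hc.le
    linarith
  constructor
  · intro t ht htt
    rcases (hV0 t ht).eq_or_lt with h | h
    · rw [← h, Real.zero_rpow (by linarith)]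
      have := mul_le_mul_of_nonneg_left (sub_le_sub_right htt t0) hc.le
      linarith
    · exact key t ht h
  · intro t ht
    rcases (hV0 t (h01.trans ht)).eq_or_lt with h | h
    · exact h.symm
    · have h1 := key t (h01.trans ht) h
      have h2 := Real.rpow_pos_of_pos h (1 - η)
      have := mul_le_mul_of_nonneg_left (sub_le_sub_right ht t0) hc.le
      linarith
end

section
/- (Settling time used in Theorem 2) Let k > 0 and 0 < μ < 1 be constants, t0 ∈ ℝ, and let V : [t0, ∞) → ℝ be a continuous, nonnegative, differentiable function with V̇(t) ≤ −2^{(1+μ)/2} k V(t)^{(1+μ)/2} for all t ≥ t0. Then V(t) = 0 for all t ≥ t1, where t1 = t0 + (1/(k(1−μ))) (2 V(t0))^{(1−μ)/2}. -/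
/-- **Settling time estimate used in Theorem 2.** If `V : [t0, ∞) → ℝ` is continuous,
nonnegative and differentiable with `V̇(t) ≤ −2^{(1+μ)/2} k V(t)^{(1+μ)/2}` for all
`t ≥ t0`, where `k > 0` and `0 < μ < 1`, then `V(t) = 0` for all
`t ≥ t1 = t0 + (1/(k(1−μ))) (2 V(t0))^{(1−μ)/2}`. -/
theorem settling_time_estimate
    (k μ t0 : ℝ) (hk : 0 < k) (hμ0 : 0 < μ) (hμ1 : μ < 1)
    (V V' : ℝ → ℝ)
    (hV0 : ∀ t, t0 ≤ t → 0 ≤ V t)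
    (hVderiv : ∀ t, t0 ≤ t → HasDerivAt V (V' t) t)
    (hVineq : ∀ t, t0 ≤ t → V' t ≤ -(2 : ℝ) ^ ((1 + μ) / 2) * k * V t ^ ((1 + μ) / 2))
    (t1 : ℝ) (ht1 : t1 = t0 + (1 / (k * (1 - μ))) * (2 * V t0) ^ ((1 - μ) / 2)) :
    ∀ t, t1 ≤ t → V t = 0 := by
  intro t ht
  have h1μ : 0 < 1 - μ := by linarith
  have hkμ : 0 < k * (1 - μ) := mul_pos hk h1μ
  have hpow0 : 0 ≤ (2 * V t0) ^ ((1 - μ) / 2) :=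
    Real.rpow_nonneg (by have := hV0 t0 le_rfl; linarith) _
  have ht0 : t0 ≤ t := by
    have : 0 ≤ (1 / (k * (1 - μ))) * (2 * V t0) ^ ((1 - μ) / 2) := by positivity
    linarith
  by_contra hne
  have hVt : 0 < V t := lt_of_le_of_ne (hV0 t ht0) (Ne.symm hne)
  have hanti : AntitoneOn V (Set.Icc t0 t) := by
    apply antitoneOn_of_deriv_nonpos (convex_Icc t0 t)
    · intro s hs
      exact (hVderiv s hs.1).continuousAt.continuousWithinAt
    · intro s hs
      rw [interior_Icc] at hs
      exact (hVderiv s hs.1.le).differentiableAt.differentiableWithinAt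
    · intro s hs
      rw [interior_Icc] at hs
      rw [(hVderiv s hs.1.le).deriv]
      have h1 := hVineq s hs.1.le
      have h2 : 0 ≤ V s ^ ((1 + μ) / 2) := Real.rpow_nonneg (hV0 s hs.1.le) _
      have h3 : 0 ≤ (2 : ℝ) ^ ((1 + μ) / 2) * k * V s ^ ((1 + μ) / 2) := by positivity
      linarith
  have hpos : ∀ s ∈ Set.Icc t0 t, 0 < V s := fun s hs =>
    lt_of_lt_of_le hVt (hanti hs ⟨ht0, le_rfl⟩ hs.2)
  have hG : ∀ s ∈ Set.Icc t0 t,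
      HasDerivAt (fun s => (2 * V s) ^ ((1 - μ) / 2) + k * (1 - μ) * s)
        ((2 * V' s) * ((1 - μ) / 2) * (2 * V s) ^ ((1 - μ) / 2 - 1) + k * (1 - μ) * 1) s := by
    intro s hs
    have hp := hpos s hs
    exact (((hVderiv s hs.1).const_mul 2).rpow_const (Or.inl (by positivity))).add
      ((hasDerivAt_id s).const_mul _)
  have hGanti : AntitoneOn (fun s => (2 * V s) ^ ((1 - μ) / 2) + k * (1 - μ) * s)
      (Set.Icc t0 t) := by
    apply antitoneOn_of_deriv_nonpos (convex_Icc t0 t)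
    · intro s hs
      exact (hG s hs).continuousAt.continuousWithinAt
    · intro s hs
      exact (hG s (interior_subset hs)).differentiableAt.differentiableWithinAt
    · intro s hs
      have hs' := interior_subset hs
      rw [(hG s hs').deriv]
      have hp := hpos s hs'
      have h1 := hVineq s hs'.1
      have h2 : (2 * V s) ^ ((1 + μ) / 2) = (2 : ℝ) ^ ((1 + μ) / 2) * V s ^ ((1 + μ) / 2) :=
        Real.mul_rpow (by norm_num) hp.le
      have h3 : (2 * V s) ^ ((1 + μ) / 2) * (2 * V s) ^ ((1 - μ) / 2 - 1) = 1 := by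
        rw [← Real.rpow_add (by positivity)]
        have : (1 + μ) / 2 + ((1 - μ) / 2 - 1) = 0 := by ring
        rw [this, Real.rpow_zero]
      have h4 : 0 < (2 * V s) ^ ((1 - μ) / 2 - 1) := Real.rpow_pos_of_pos (by positivity) _
      have h5 : V' s ≤ -k * (2 * V s) ^ ((1 + μ) / 2) := by rw [h2]; linarith
      have h6 := mul_le_mul_of_nonneg_right h5 (mul_pos h1μ h4).le
      have h7 : -k * (2 * V s) ^ ((1 + μ) / 2) * ((1 - μ) * (2 * V s) ^ ((1 - μ) / 2 - 1))
          = -k * (1 - μ) := by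
        linear_combination (-k * (1 - μ)) * h3
      rw [h7] at h6
      linarith
  have hfin := hGanti ⟨le_rfl, ht0⟩ ⟨ht0, le_rfl⟩ ht0
  have hGt : 0 < (2 * V t) ^ ((1 - μ) / 2) := Real.rpow_pos_of_pos (by positivity) _
  have h8 : k * (1 - μ) * (t1 - t0) = (2 * V t0) ^ ((1 - μ) / 2) := by
    rw [ht1]
    field_simp
    ring
  have h9 : k * (1 - μ) * t1 ≤ k * (1 - μ) * t := mul_le_mul_of_nonneg_left ht hkμ.le
  simp only at hfin
  linarith
end

section
/- (Inequality (21)) Let Q be a real symmetric positive definite n×n matrix, let m ≥ 1 and 0 ≤ ρ < m be integers, let e_1, …, e_m ∈ ℝ^n, and let S ⊆ {1,…,m} with |S| = ρ be such that ‖e_i‖ ≥ ‖e_j‖ whenever i ∈ S and j ∉ S. Then (1/(m−ρ)) Σ_{j ∉ S} e_jᵀ Q e_j ≤ (λmax(Q)/(λmin(Q) · m)) Σ_{i=1}^m e_iᵀ Q e_i. -/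
open Matrix

/-- The largest eigenvalue of a real symmetric matrix, characterized as the
supremum of the Rayleigh quotient over the Euclidean unit sphere. -/
noncomputable def lamMax {k : ℕ} (A : Matrix (Fin k) (Fin k) ℝ) : ℝ :=
  sSup {r : ℝ | ∃ x : EuclideanSpace ℝ (Fin k), ‖x‖ = 1 ∧ r = x ⬝ᵥ A.mulVec x}

/-- The smallest eigenvalue of a real symmetric matrix, characterized as the
infimum of the Rayleigh quotient over the Euclidean unit sphere. -/
noncomputable def lamMin {k : ℕ} (A : Matrix (Fin k) (Fin k) ℝ) : ℝ :=
  sInf {r : ℝ | ∃ x : EuclideanSpace ℝ (Fin k), ‖x‖ = 1 ∧ r = x ⬝ᵥ A.mulVec x}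

/-- The Rayleigh values on the unit sphere form a compact set. -/
lemma rayleigh_compact {k : ℕ} (A : Matrix (Fin k) (Fin k) ℝ) :
    IsCompact {r : ℝ | ∃ x : EuclideanSpace ℝ (Fin k), ‖x‖ = 1 ∧ r = x ⬝ᵥ A.mulVec x} := by
  have hc : Continuous (fun x : EuclideanSpace ℝ (Fin k) => x ⬝ᵥ A.mulVec x) := by
    simp only [dotProduct, Matrix.mulVec]
    fun_prop
  have := (isCompact_sphere (0 : EuclideanSpace ℝ (Fin k)) 1).image hc
  convert this using 1
  ext r
  simp only [Set.mem_setOf_eq, Set.mem_image, mem_sphere_zero_iff_norm]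
  constructor
  · rintro ⟨x, h, rfl⟩
    exact ⟨x, h, rfl⟩
  · rintro ⟨x, h, rfl⟩
    exact ⟨x, h, rfl⟩

lemma rayleigh_scale {k : ℕ} (A : Matrix (Fin k) (Fin k) ℝ) (x : EuclideanSpace ℝ (Fin k))
    (hx : x ≠ 0) : ∃ r ∈ {r : ℝ | ∃ x : EuclideanSpace ℝ (Fin k), ‖x‖ = 1 ∧ r = x ⬝ᵥ A.mulVec x},
      x ⬝ᵥ A.mulVec x = r * ‖x‖ ^ 2 := by
  have h0 : ‖x‖ ≠ 0 := norm_ne_zero_iff.mpr hx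
  refine ⟨_, ⟨‖x‖⁻¹ • x, ?_, rfl⟩, ?_⟩
  · rw [norm_smul, norm_inv, norm_norm, inv_mul_cancel₀ h0]
  · rw [WithLp.ofLp_smul, Matrix.mulVec_smul, smul_dotProduct, dotProduct_smul, smul_eq_mul,
      smul_eq_mul]
    field_simp

lemma le_lamMax {k : ℕ} (A : Matrix (Fin k) (Fin k) ℝ) (x : EuclideanSpace ℝ (Fin k)) :
    x ⬝ᵥ A.mulVec x ≤ lamMax A * ‖x‖ ^ 2 := by
  by_cases hx : x = 0
  · simp [hx]
  obtain ⟨r, hr, h⟩ := rayleigh_scale A x hx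
  rw [h]
  exact mul_le_mul_of_nonneg_right (le_csSup (rayleigh_compact A).bddAbove hr) (by positivity)

lemma lamMin_le {k : ℕ} (A : Matrix (Fin k) (Fin k) ℝ) (x : EuclideanSpace ℝ (Fin k)) :
    lamMin A * ‖x‖ ^ 2 ≤ x ⬝ᵥ A.mulVec x := by
  by_cases hx : x = 0
  · simp [hx]
  obtain ⟨r, hr, h⟩ := rayleigh_scale A x hx
  rw [h]
  exact mul_le_mul_of_nonneg_right (csInf_le (rayleigh_compact A).bddBelow hr) (by positivity)

lemma posDef_quad_pos {k : ℕ} {A : Matrix (Fin k) (Fin k) ℝ} (hA : A.PosDef)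
    (x : EuclideanSpace ℝ (Fin k)) (hx : x ≠ 0) : 0 < x ⬝ᵥ A.mulVec x := by
  have h : x.ofLp ≠ 0 := fun h => hx (by ext i; simp [h])
  simpa using hA.dotProduct_mulVec_pos h

lemma lamMin_pos {k : ℕ} {A : Matrix (Fin k) (Fin k) ℝ} (hA : A.PosDef)
    (x : EuclideanSpace ℝ (Fin k)) (hx : x ≠ 0) : 0 < lamMin A := by
  obtain ⟨r, hr, h⟩ := rayleigh_scale A x hx
  obtain ⟨y, hy, h⟩ := (rayleigh_compact A).sInf_mem ⟨r, hr⟩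
  unfold lamMin
  rw [h]
  exact posDef_quad_pos hA y (by rintro rfl; simp at hy)

/-- **Inequality (21).** If `Q` is symmetric positive definite, and `S` consists of `ρ`
vectors with the largest norms among `e₁, …, e_m ∈ ℝⁿ` (`0 ≤ ρ < m`), then
`(1/(m−ρ)) Σ_{j∉S} eⱼᵀ Q eⱼ ≤ (λmax(Q)/(λmin(Q) m)) Σᵢ eᵢᵀ Q eᵢ`. -/
theorem averaging_quadratic_form_inequality {n m ρ : ℕ} (hm : 1 ≤ m) (hρ : ρ < m)
    (Q : Matrix (Fin n) (Fin n) ℝ) (hQ : Q.PosDef)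
    (e : Fin m → EuclideanSpace ℝ (Fin n))
    (S : Finset (Fin m)) (hcard : S.card = ρ)
    (hS : ∀ i ∈ S, ∀ j ∉ S, ‖e j‖ ≤ ‖e i‖) :
    (1 / ((m : ℝ) - ρ)) * ∑ j ∈ Sᶜ, e j ⬝ᵥ Q.mulVec (e j)
      ≤ (lamMax Q / (lamMin Q * m)) * ∑ i, e i ⬝ᵥ Q.mulVec (e i) := by
  by_cases h0 : ∀ i, e i = 0
  · simp [h0]
  push Not at h0
  obtain ⟨i₀, hi₀⟩ := h0
  have hmin := lamMin_pos hQ _ hi₀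
  have hmax : 0 ≤ lamMax Q := by
    by_contra! h
    have h1 := posDef_quad_pos hQ _ hi₀
    have h2 := le_lamMax Q (e i₀)
    nlinarith [sq_nonneg ‖e i₀‖]
  have hm0 : (0 : ℝ) < m := by exact_mod_cast hm
  have hd : (0 : ℝ) < (m : ℝ) - ρ := by
    have : (ρ : ℝ) < m := by exact_mod_cast hρ
    linarith
  have hA : ∑ j ∈ Sᶜ, e j ⬝ᵥ Q.mulVec (e j) ≤ lamMax Q * ∑ j ∈ Sᶜ, ‖e j‖ ^ 2 := by
    rw [Finset.mul_sum]
    exact Finset.sum_le_sum fun j _ => le_lamMax Q (e j)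
  have hB : lamMin Q * ∑ i, ‖e i‖ ^ 2 ≤ ∑ i, e i ⬝ᵥ Q.mulVec (e i) := by
    rw [Finset.mul_sum]
    exact Finset.sum_le_sum fun j _ => lamMin_le Q (e j)
  have hcc : ((Sᶜ).card : ℝ) = (m : ℝ) - ρ := by
    rw [Finset.card_compl, Fintype.card_fin, hcard, Nat.cast_sub hρ.le]
  have hC : (ρ : ℝ) * ∑ j ∈ Sᶜ, ‖e j‖ ^ 2 ≤ ((m : ℝ) - ρ) * ∑ i ∈ S, ‖e i‖ ^ 2 := by
    have h : ∑ i ∈ S, ∑ j ∈ Sᶜ, ‖e j‖ ^ 2 ≤ ∑ i ∈ S, ∑ j ∈ Sᶜ, ‖e i‖ ^ 2 := by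
      refine Finset.sum_le_sum fun i hi => Finset.sum_le_sum fun j hj => ?_
      have := hS i hi j (Finset.mem_compl.mp hj)
      gcongr
    simp only [Finset.sum_const, nsmul_eq_mul, hcc, hcard] at h
    rwa [← Finset.mul_sum] at h
  have hD := Finset.sum_add_sum_compl S (fun i => ‖e i‖ ^ 2)
  have hE : (∑ j ∈ Sᶜ, ‖e j‖ ^ 2) / ((m : ℝ) - ρ) ≤ (∑ i, ‖e i‖ ^ 2) / m := by
    rw [div_le_div_iff₀ hd hm0]
    rw [← hD]
    linarith
  calc (1 / ((m : ℝ) - ρ)) * ∑ j ∈ Sᶜ, e j ⬝ᵥ Q.mulVec (e j)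
      ≤ (1 / ((m : ℝ) - ρ)) * (lamMax Q * ∑ j ∈ Sᶜ, ‖e j‖ ^ 2) := by gcongr
    _ = lamMax Q * ((∑ j ∈ Sᶜ, ‖e j‖ ^ 2) / ((m : ℝ) - ρ)) := by ring
    _ ≤ lamMax Q * ((∑ i, ‖e i‖ ^ 2) / m) := by gcongr
    _ = (lamMax Q / (lamMin Q * m)) * (lamMin Q * ∑ i, ‖e i‖ ^ 2) := by field_simp
    _ ≤ _ := by gcongr
end

section
/- (Impulsive jump estimate, inequality (22), single-cluster form) Let Q be a real symmetric positive definite n×n matrix, let m ≥ 1 and 0 ≤ ρ < m be integers, let d ∈ (−2, 0), let e_1, …, e_m ∈ ℝ^n, and let S ⊆ {1,…,m} with |S| = ρ be such that ‖e_i‖ ≥ ‖e_j‖ whenever i ∈ S and j ∉ S. Then (1+d)² Σ_{i ∈ S} e_iᵀ Q e_i + Σ_{j ∉ S} e_jᵀ Q e_j ≤ η Σ_{i=1}^m e_iᵀ Q e_i, where η = (1+d)² − d(2+d) · λmax(Q)(m−ρ)/(λmin(Q) m). -/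
open Matrix

/-- The quadratic form as a function on Euclidean space. -/
theorem ije_cont {n : ℕ} (Q : Matrix (Fin n) (Fin n) ℝ) :
    Continuous (fun x : EuclideanSpace ℝ (Fin n) => x ⬝ᵥ Q.mulVec x) := by
  simp only [dotProduct, Matrix.mulVec]
  fun_prop

theorem ije_set {n : ℕ} (Q : Matrix (Fin n) (Fin n) ℝ) :
    {r : ℝ | ∃ x : EuclideanSpace ℝ (Fin n), ‖x‖ = 1 ∧ r = x ⬝ᵥ Q.mulVec x}
      = Set.image (fun x : EuclideanSpace ℝ (Fin n) => x ⬝ᵥ Q.mulVec x) (Metric.sphere 0 1) := by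
  ext r
  simp only [Set.mem_ofPred_eq, Set.mem_image, mem_sphere_zero_iff_norm]
  exact ⟨fun ⟨x, h, hh⟩ => ⟨x, h, hh.symm⟩, fun ⟨x, h, hh⟩ => ⟨x, h, hh.symm⟩⟩

theorem ije_compact {n : ℕ} (Q : Matrix (Fin n) (Fin n) ℝ) :
    IsCompact {r : ℝ | ∃ x : EuclideanSpace ℝ (Fin n), ‖x‖ = 1 ∧ r = x ⬝ᵥ Q.mulVec x} := by
  rw [ije_set]
  exact (isCompact_sphere _ _).image (ije_cont Q)

theorem ije_scale {n : ℕ} (Q : Matrix (Fin n) (Fin n) ℝ) (x : EuclideanSpace ℝ (Fin n))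
    (hx : x ≠ 0) : ∃ r ∈ {r : ℝ | ∃ x : EuclideanSpace ℝ (Fin n), ‖x‖ = 1 ∧ r = x ⬝ᵥ Q.mulVec x},
      x ⬝ᵥ Q.mulVec x = r * ‖x‖ ^ 2 := by
  have h : ‖x‖ ≠ 0 := norm_ne_zero_iff.mpr hx
  refine ⟨_, ⟨(‖x‖⁻¹) • x, by rw [norm_smul, norm_inv, norm_norm, inv_mul_cancel₀ h], rfl⟩, ?_⟩
  rw [WithLp.ofLp_smul, Matrix.mulVec_smul, dotProduct_smul, smul_dotProduct, smul_eq_mul,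
    smul_eq_mul]
  field_simp

theorem ije_le {n : ℕ} (Q : Matrix (Fin n) (Fin n) ℝ) (x : EuclideanSpace ℝ (Fin n)) :
    x ⬝ᵥ Q.mulVec x ≤ lamMax Q * ‖x‖ ^ 2 := by
  by_cases hx : x = 0
  · simp [hx]
  · obtain ⟨r, hr, h⟩ := ije_scale Q x hx
    rw [h]
    exact mul_le_mul_of_nonneg_right (le_csSup (ije_compact Q).bddAbove hr) (sq_nonneg _)

theorem ije_ge {n : ℕ} (Q : Matrix (Fin n) (Fin n) ℝ) (x : EuclideanSpace ℝ (Fin n)) :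
    lamMin Q * ‖x‖ ^ 2 ≤ x ⬝ᵥ Q.mulVec x := by
  by_cases hx : x = 0
  · simp [hx]
  · obtain ⟨r, hr, h⟩ := ije_scale Q x hx
    rw [h]
    exact mul_le_mul_of_nonneg_right (csInf_le (ije_compact Q).bddBelow hr) (sq_nonneg _)

theorem ije_pos {n : ℕ} (Q : Matrix (Fin n) (Fin n) ℝ) (hQ : Q.PosDef)
    (x : EuclideanSpace ℝ (Fin n)) (hx : x ≠ 0) : 0 < x ⬝ᵥ Q.mulVec x := by
  have h : x.ofLp ≠ 0 := fun h => hx (by ext i; simp [h])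
  simpa using hQ.dotProduct_mulVec_pos h

theorem ije_min_pos {n : ℕ} (Q : Matrix (Fin n) (Fin n) ℝ) (hQ : Q.PosDef)
    (x : EuclideanSpace ℝ (Fin n)) (hx : x ≠ 0) : 0 < lamMin Q := by
  obtain ⟨r, hr, -⟩ := ije_scale Q x hx
  obtain ⟨y, hy, h⟩ := (ije_compact Q).sInf_mem ⟨r, hr⟩
  unfold lamMin
  rw [h]
  exact ije_pos Q hQ y (by rintro rfl; simp at hy)

theorem ije_comb {m ρ : ℕ} (a : Fin m → ℝ) (S : Finset (Fin m)) (hcard : S.card = ρ)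
    (hS : ∀ i ∈ S, ∀ j ∉ S, a j ≤ a i) :
    m * ∑ j ∈ Sᶜ, a j ≤ ((m : ℝ) - ρ) * ∑ i, a i := by
  have hc : (Sᶜ.card : ℝ) = m - ρ := by
    have := S.card_add_card_compl
    rw [hcard, Fintype.card_fin] at this
    have h2 : (ρ : ℝ) + Sᶜ.card = m := by exact_mod_cast this
    linarith
  have key : ∑ i ∈ S, ∑ j ∈ Sᶜ, a j ≤ ∑ i ∈ S, ∑ j ∈ Sᶜ, a i :=
    Finset.sum_le_sum fun i hi => Finset.sum_le_sum fun j hj =>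
      hS i hi j (Finset.mem_compl.mp hj)
  simp only [Finset.sum_const, nsmul_eq_mul, hcard, hc, ← Finset.mul_sum] at key
  rw [← Finset.sum_add_sum_compl S a]
  linarith

/-- **Impulsive jump estimate (inequality (22), single cluster).** If `Q` is symmetric
positive definite, `d ∈ (−2, 0)`, and `S` consists of `ρ` vectors with the largest norms
among `e₁, …, e_m ∈ ℝⁿ` (`0 ≤ ρ < m`), then
`(1+d)² Σ_{i∈S} eᵢᵀ Q eᵢ + Σ_{j∉S} eⱼᵀ Q eⱼ ≤ η Σᵢ eᵢᵀ Q eᵢ`, where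
`η = (1+d)² − d(2+d) λmax(Q)(m−ρ)/(λmin(Q) m)`. -/
theorem impulsive_jump_estimate {n m ρ : ℕ} (hm : 1 ≤ m) (hρ : ρ < m)
    (Q : Matrix (Fin n) (Fin n) ℝ) (hQ : Q.PosDef)
    (d : ℝ) (hd1 : -2 < d) (hd2 : d < 0)
    (e : Fin m → EuclideanSpace ℝ (Fin n))
    (S : Finset (Fin m)) (hcard : S.card = ρ)
    (hS : ∀ i ∈ S, ∀ j ∉ S, ‖e j‖ ≤ ‖e i‖) :
    (1 + d) ^ 2 * ∑ i ∈ S, e i ⬝ᵥ Q.mulVec (e i) + ∑ j ∈ Sᶜ, e j ⬝ᵥ Q.mulVec (e j)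
      ≤ ((1 + d) ^ 2 - d * (2 + d) * (lamMax Q * ((m : ℝ) - ρ)) / (lamMin Q * m))
          * ∑ i, e i ⬝ᵥ Q.mulVec (e i) := by
  by_cases h0 : ∀ i, e i = 0
  · simp [h0]
  push Not at h0
  obtain ⟨i₀, hi₀⟩ := h0
  have hmin := ije_min_pos Q hQ _ hi₀
  have hmR : (0 : ℝ) < m := by exact_mod_cast hm
  have hρR : (ρ : ℝ) < m := by exact_mod_cast hρ
  have hmax : 0 ≤ lamMax Q := by
    have h1 := (ije_pos Q hQ _ hi₀).trans_le (ije_le Q (e i₀))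
    exact (pos_of_mul_pos_left h1 (sq_nonneg _)).le
  have hcomb := ije_comb (fun i => ‖e i‖ ^ 2) S hcard
    (fun i hi j hj => pow_le_pow_left₀ (norm_nonneg _) (hS i hi j hj) 2)
  have hA : ∑ j ∈ Sᶜ, e j ⬝ᵥ Q.mulVec (e j) ≤ lamMax Q * ∑ j ∈ Sᶜ, ‖e j‖ ^ 2 := by
    rw [Finset.mul_sum]; exact Finset.sum_le_sum fun j _ => ije_le Q (e j)
  have hB : lamMin Q * ∑ j, ‖e j‖ ^ 2 ≤ ∑ j, e j ⬝ᵥ Q.mulVec (e j) := by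
    rw [Finset.mul_sum]; exact Finset.sum_le_sum fun j _ => ije_ge Q (e j)
  have hsplit := Finset.sum_add_sum_compl S (fun i => e i ⬝ᵥ Q.mulVec (e i))
  simp only at hsplit hcomb
  generalize ∑ i, e i ⬝ᵥ Q.mulVec (e i) = T at *
  generalize ∑ i ∈ S, e i ⬝ᵥ Q.mulVec (e i) = A at *
  generalize ∑ j ∈ Sᶜ, e j ⬝ᵥ Q.mulVec (e j) = B at *
  generalize ∑ j ∈ Sᶜ, ‖e j‖ ^ 2 = b at *
  generalize ∑ j, ‖e j‖ ^ 2 = t at *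
  have hk : B ≤ (lamMax Q * ((m : ℝ) - ρ)) / (lamMin Q * m) * T := by
    rw [div_mul_eq_mul_div, le_div_iff₀ (by positivity)]
    calc B * (lamMin Q * m) ≤ (lamMax Q * b) * (lamMin Q * m) := by gcongr
      _ = lamMax Q * lamMin Q * (m * b) := by ring
      _ ≤ lamMax Q * lamMin Q * ((m - ρ) * t) := by gcongr
      _ = lamMax Q * (m - ρ) * (lamMin Q * t) := by ring
      _ ≤ lamMax Q * (m - ρ) * T :=
        mul_le_mul_of_nonneg_left hB (mul_nonneg hmax (by linarith))
  have hd : 0 ≤ -(d * (2 + d)) := by nlinarith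
  have := mul_le_mul_of_nonneg_left hk hd
  rw [mul_div_assoc]
  subst hsplit
  linarith
end
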